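/- Assume A is standardized and let 1 ≤ β ≤ m. Let x ∈ range(Aᵀ), and for each subset τ ⊆ {1,…,m} of cardinality β let i(τ) ∈ τ be an index maximizing |A^{(i)}x − b_i| over i ∈ τ, and set x_τ⁺ = x − (A^{(i(τ))}x − b_{i(τ)})·(A^{(i(τ))})ᵀ. Assume D := Σ_τ max_{i∈τ} (A^{(i)}x − b_i)² > 0 and set ξ = (Σ_τ ‖A_τ x − b_τ‖₂²) / D. Then (1/C(m,β)) Σ_τ ‖x_τ⁺ − x⋆‖₂² ≤ (1 − (β/(ξ·m))·λ_min⁺(AᵀA)) · ‖x − x⋆‖₂². -/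

import Mathlib

open Matrix Finset

/-- The largest eigenvalue of a square real matrix (as the supremum of its
eigenvalue set). -/
noncomputable def maxEig {k : ℕ} (M : Matrix (Fin k) (Fin k) ℝ) : ℝ :=
  sSup {μ : ℝ | Module.End.HasEigenvalue (Matrix.mulVecLin M) μ}

/-- The smallest positive eigenvalue of a square real matrix. -/
noncomputable def minPosEig {k : ℕ} (M : Matrix (Fin k) (Fin k) ℝ) : ℝ :=
  sInf {μ : ℝ | Module.End.HasEigenvalue (Matrix.mulVecLin M) μ ∧ 0 < μ}

/-- The restriction of `A` to the rows indexed by `I`. -/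
def rowSub {m n : ℕ} (A : Matrix (Fin m) (Fin n) ℝ) (I : Finset (Fin m)) :
    Matrix {i : Fin m // i ∈ I} (Fin n) ℝ :=
  fun i j => A i.1 j

/-- Squared Euclidean norm. -/
noncomputable def sqNorm {k : ℕ} (v : Fin k → ℝ) : ℝ := ∑ j, (v j) ^ 2

/-- `xp` is the exact block Kaczmarz update of `x` with respect to the row
index set `I`: it satisfies the equations indexed by `I` and minimizes the
distance to `x` among all such points (hence is the orthogonal projection of
`x` onto the affine solution set, which is the unique such minimizer). -/
def IsKaczmarzUpdate {m n : ℕ} (A : Matrix (Fin m) (Fin n) ℝ)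
    (b : Fin m → ℝ) (I : Finset (Fin m)) (x xp : Fin n → ℝ) : Prop :=
  (∀ i ∈ I, A i ⬝ᵥ xp = b i) ∧
  ∀ y : Fin n → ℝ, (∀ i ∈ I, A i ⬝ᵥ y = b i) → sqNorm (xp - x) ≤ sqNorm (y - x)

/-- `I` is a greedy `δ`-subset of `τ` for `x`: `I ⊆ τ`, `|I| = δ`, and the
residual entries on `I` dominate (in absolute value) those on `τ \ I`. -/
def IsGreedySubset {m n : ℕ} (A : Matrix (Fin m) (Fin n) ℝ) (b : Fin m → ℝ)
    (x : Fin n → ℝ) (δ : ℕ) (τ I : Finset (Fin m)) : Prop :=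
  I ⊆ τ ∧ I.card = δ ∧
    ∀ i ∈ I, ∀ j ∈ τ \ I, |A j ⬝ᵥ x - b j| ≤ |A i ⬝ᵥ x - b i|

/-!
With residual `r = A x - b = A (x - x⋆)`, projecting onto the hyperplane of row `l` lowers the
squared error by exactly `r l ^ 2`, so averaging over all samples lowers it by `D / C(m, β)`.
Every row lies in the same number of samples, so `ξ * D` is the multiple
`β * C(m, β) / m` of `‖r‖²`; hence the decrease is `β / (ξ m) * ‖r‖²`. Finally
`‖A (x - x⋆)‖² ≥ λ_min⁺(AᵀA) * ‖x - x⋆‖²` because `x - x⋆` lies in the row space,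
which is orthogonal to the kernel of `AᵀA`.
-/

section SampleCounting

variable {α M : Type*} [AddCommMonoid M]

lemma sum_powersetCard_succ_sum (s : Finset α) (k : ℕ) (f : α → M) :
    ∑ τ ∈ s.powersetCard (k + 1), ∑ l ∈ τ, f l = (#s - 1).choose k • ∑ l ∈ s, f l := by
  classical
  have hcount : ∀ l ∈ s, #{τ ∈ s.powersetCard (k + 1) | l ∈ τ} = (#s - 1).choose k := by
    intro l hl
    simpa using card_filter_powersetCard_subset {l} s (k + 1) (by simpa) (by simp)
  calc ∑ τ ∈ s.powersetCard (k + 1), ∑ l ∈ τ, f l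
      = ∑ l ∈ s, ∑ τ ∈ s.powersetCard (k + 1) with l ∈ τ, f l :=
        sum_comm' fun τ l => by
          simp only [mem_filter, mem_powersetCard]
          exact ⟨fun ⟨hτ, hl⟩ => ⟨⟨hτ, hl⟩, hτ.1 hl⟩, fun h => h.1⟩
    _ = (#s - 1).choose k • ∑ l ∈ s, f l := by
        rw [smul_sum]
        exact sum_congr rfl fun l hl => by rw [sum_const, hcount l hl]

lemma card_nsmul_sum_powersetCard_sum (s : Finset α) (k : ℕ) (f : α → M) :
    #s • ∑ τ ∈ s.powersetCard k, ∑ l ∈ τ, f l = (k * (#s).choose k) • ∑ l ∈ s, f l := by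
  rcases k with _ | k
  · simp
  rcases s.eq_empty_or_nonempty with rfl | hs
  · simp
  obtain ⟨c, hc⟩ := Nat.exists_eq_add_one.2 hs.card_pos
  rw [sum_powersetCard_succ_sum, smul_smul, hc, Nat.add_sub_cancel, Nat.add_one_mul_choose_eq,
    mul_comm (k + 1)]

end SampleCounting

section SpectralExpansion

variable {κ : Type*} [Fintype κ]

lemma sum_dotProduct_mul_dotProduct {ι : Type*} [Fintype ι]
    (v : OrthonormalBasis ι ℝ (EuclideanSpace ℝ κ)) (u w : κ → ℝ) :
    ∑ k, (v k ⬝ᵥ u) * (v k ⬝ᵥ w) = u ⬝ᵥ w := by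
  have h := v.sum_inner_mul_inner (WithLp.toLp 2 u) (WithLp.toLp 2 w)
  simpa only [EuclideanSpace.inner_eq_star_dotProduct, star_trivial, dotProduct_comm _ (v _).ofLp,
    dotProduct_comm w u] using h

variable [DecidableEq κ] {M : Matrix κ κ ℝ}

lemma dotProduct_mulVec_eq_sum_eigenvalues (hM : M.IsHermitian) (w : κ → ℝ) :
    w ⬝ᵥ M *ᵥ w = ∑ k, hM.eigenvalues k * (hM.eigenvectorBasis k ⬝ᵥ w) ^ 2 := by
  rw [← sum_dotProduct_mul_dotProduct hM.eigenvectorBasis]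
  refine sum_congr rfl fun k _ => ?_
  have hcoeff : hM.eigenvectorBasis k ⬝ᵥ M *ᵥ w =
      hM.eigenvalues k * (hM.eigenvectorBasis k ⬝ᵥ w) := by
    have hsymm : Mᵀ = M := by simpa using hM.eq
    rw [dotProduct_mulVec, ← mulVec_transpose, hsymm, hM.mulVec_eigenvectorBasis,
      smul_dotProduct, smul_eq_mul]
  rw [hcoeff]
  ring

lemma hasEigenvalue_mulVecLin_eigenvalues (hM : M.IsHermitian) (k : κ) :
    Module.End.HasEigenvalue M.mulVecLin (hM.eigenvalues k) := by
  rw [← Matrix.toLin'_apply', Module.End.hasEigenvalue_iff_mem_spectrum, spectrum_toLin']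
  exact hM.eigenvalues_mem_spectrum_real k

end SpectralExpansion

lemma minPosEig_le {k : ℕ} {M : Matrix (Fin k) (Fin k) ℝ} {μ : ℝ}
    (hμ : Module.End.HasEigenvalue M.mulVecLin μ) (hpos : 0 < μ) : minPosEig M ≤ μ :=
  csInf_le ⟨0, fun _ h => h.2.le⟩ ⟨hμ, hpos⟩

lemma minPosEig_mul_dotProduct_self_le {k : ℕ} {M : Matrix (Fin k) (Fin k) ℝ}
    (hM : M.PosSemidef) {w : Fin k → ℝ} (hw : ∀ u, M *ᵥ u = 0 → u ⬝ᵥ w = 0) :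
    minPosEig M * (w ⬝ᵥ w) ≤ w ⬝ᵥ M *ᵥ w := by
  rw [dotProduct_mulVec_eq_sum_eigenvalues hM.1,
    ← sum_dotProduct_mul_dotProduct hM.1.eigenvectorBasis, mul_sum]
  refine sum_le_sum fun j _ => ?_
  rw [← sq]
  rcases (hM.eigenvalues_nonneg j).eq_or_lt with hzero | hpos
  · have hker : M *ᵥ hM.1.eigenvectorBasis j = 0 := by
      rw [hM.1.mulVec_eigenvectorBasis, ← hzero, zero_smul]
    simp [hw _ hker]
  · gcongr
    exact minPosEig_le (hasEigenvalue_mulVecLin_eigenvalues hM.1 j) hpos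

lemma sqNorm_eq_dotProduct {k : ℕ} (v : Fin k → ℝ) : sqNorm v = v ⬝ᵥ v := by
  simp only [sqNorm, dotProduct, sq]

lemma minPosEig_mul_sqNorm_le_sqNorm_mulVec {m n : ℕ} (A : Matrix (Fin m) (Fin n) ℝ)
    {w : Fin n → ℝ} (hw : w ∈ Set.range Aᵀ.mulVec) :
    minPosEig (Aᵀ * A) * sqNorm w ≤ sqNorm (A *ᵥ w) := by
  have hpsd : (Aᵀ * A).PosSemidef := posSemidef_conjTranspose_mul_self A
  have hker : ∀ u, (Aᵀ * A) *ᵥ u = 0 → u ⬝ᵥ w = 0 := by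
    obtain ⟨z, rfl⟩ := hw
    intro u hu
    have hAu : A *ᵥ u = 0 := (conjTranspose_mul_self_mulVec_eq_zero A u).1 hu
    rw [dotProduct_transpose_mulVec, hAu, dotProduct_zero]
  calc minPosEig (Aᵀ * A) * sqNorm w
      ≤ w ⬝ᵥ (Aᵀ * A) *ᵥ w := by
        rw [sqNorm_eq_dotProduct]
        exact minPosEig_mul_dotProduct_self_le hpsd hker
    _ = sqNorm (A *ᵥ w) := by
        rw [sqNorm_eq_dotProduct, ← mulVec_mulVec, dotProduct_transpose_mulVec]

/-- The Kaczmarz update of `x` for the single equation `a ⬝ᵥ y = c`. When `a ⬝ᵥ a = 1` it is the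
orthogonal projection of `x` onto that hyperplane; for other `a` it is not, since the correction is
not divided by `a ⬝ᵥ a`. -/
def kaczmarzStep {R κ : Type*} [Ring R] [Fintype κ] (a : κ → R) (c : R) (x : κ → R) : κ → R :=
  x - (a ⬝ᵥ x - c) • a

lemma sqNorm_kaczmarzStep_sub {n : ℕ} {a y : Fin n → ℝ} {c : ℝ} (ha : a ⬝ᵥ a = 1)
    (hy : a ⬝ᵥ y = c) (x : Fin n → ℝ) :
    sqNorm (kaczmarzStep a c x - y) = sqNorm (x - y) - (a ⬝ᵥ x - c) ^ 2 := by
  subst hy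
  simp only [kaczmarzStep, sqNorm_eq_dotProduct, sub_dotProduct, dotProduct_sub, smul_dotProduct,
    dotProduct_smul, smul_eq_mul, ha, dotProduct_comm _ a, dotProduct_comm y x]
  ring

lemma sum_sqNorm_kaczmarzStep_sub {m n : ℕ} {A : Matrix (Fin m) (Fin n) ℝ} {b : Fin m → ℝ}
    {y : Fin n → ℝ} (hstd : ∀ l, ∑ j, (A l j) ^ 2 = 1) (hy : A *ᵥ y = b) {ι : Type*}
    (T : Finset ι) (i : ι → Fin m) (x : Fin n → ℝ) :
    ∑ τ ∈ T, sqNorm (kaczmarzStep (A (i τ)) (b (i τ)) x - y) =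
      #T * sqNorm (x - y) - ∑ τ ∈ T, (A (i τ) ⬝ᵥ x - b (i τ)) ^ 2 := by
  have hunit (l : Fin m) : A l ⬝ᵥ A l = 1 := (sqNorm_eq_dotProduct _).symm.trans (hstd l)
  simp only [sqNorm_kaczmarzStep_sub (hunit _) (congrFun hy _), sum_sub_distrib, sum_const,
    nsmul_eq_mul]

lemma sSup_image_sq_eq_of_abs_le {ι : Type*} {r : ι → ℝ} {s : Set ι} {k : ι} (hk : k ∈ s)
    (hmax : ∀ j ∈ s, |r j| ≤ |r k|) : sSup ((fun j => r j ^ 2) '' s) = r k ^ 2 :=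
  IsGreatest.csSup_eq ⟨⟨k, hk, rfl⟩, Set.forall_mem_image.2 fun j hj => sq_le_sq.2 (hmax j hj)⟩

theorem skm_one_step_general {m n β : ℕ} (hβ1 : 1 ≤ β) (hβm : β ≤ m)
    {A : Matrix (Fin m) (Fin n) ℝ} (hstd : ∀ l, ∑ j, (A l j) ^ 2 = 1)
    {b : Fin m → ℝ} {xstar x : Fin n → ℝ} (hconsistent : A *ᵥ xstar = b)
    (hx : x - xstar ∈ Set.range Aᵀ.mulVec) (i : Finset (Fin m) → Fin m) {D ξ : ℝ}
    (hD : D = ∑ τ ∈ powersetCard β univ, (A (i τ) ⬝ᵥ x - b (i τ)) ^ 2) (hDpos : 0 < D)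
    (hξ : ξ = (∑ τ ∈ powersetCard β univ, ∑ l ∈ τ, (A l ⬝ᵥ x - b l) ^ 2) / D) :
    (1 / (m.choose β : ℝ)) *
        ∑ τ ∈ powersetCard β univ, sqNorm (kaczmarzStep (A (i τ)) (b (i τ)) x - xstar) ≤
      (1 - ((β : ℝ) / (ξ * (m : ℝ))) * minPosEig (Aᵀ * A)) * sqNorm (x - xstar) := by
  have hβ : (0 : ℝ) < β := by exact_mod_cast hβ1
  have hC : (0 : ℝ) < m.choose β := by exact_mod_cast Nat.choose_pos hβm
  set r := A *ᵥ x - b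
  have hr_eq : A *ᵥ (x - xstar) = r := by rw [mulVec_sub, hconsistent]
  have hr_pos : 0 < sqNorm r := by
    obtain ⟨τ, -, hτ⟩ := exists_ne_zero_of_sum_ne_zero (hD ▸ hDpos.ne')
    exact sum_pos' (fun _ _ => sq_nonneg _) ⟨i τ, mem_univ _, (sq_nonneg _).lt_of_ne' hτ⟩
  have herror : ∑ τ ∈ powersetCard β univ,
      sqNorm (kaczmarzStep (A (i τ)) (b (i τ)) x - xstar) =
        m.choose β * sqNorm (x - xstar) - D := by
    rw [sum_sqNorm_kaczmarzStep_sub hstd hconsistent, card_powersetCard, card_univ,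
      Fintype.card_fin, hD]
  have hsample : ξ * m * D = β * m.choose β * sqNorm r := by
    have hcount := card_nsmul_sum_powersetCard_sum univ β fun l => r l ^ 2
    simp only [card_univ, Fintype.card_fin, nsmul_eq_mul, Nat.cast_mul] at hcount
    rw [hξ, mul_right_comm, div_mul_cancel₀ _ hDpos.ne', mul_comm]
    exact hcount
  have hξm : 0 < ξ * m := by
    refine pos_of_mul_pos_left ?_ hDpos.le
    rw [hsample]
    exact mul_pos (mul_pos hβ hC) hr_pos
  calc _ = sqNorm (x - xstar) - D / m.choose β := by rw [herror]; field_simp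
    _ = sqNorm (x - xstar) - β / (ξ * m) * sqNorm r := by
        congr 1
        rw [div_mul_eq_mul_div, div_eq_div_iff hC.ne' hξm.ne']
        linarith
    _ ≤ sqNorm (x - xstar) - β / (ξ * m) * (minPosEig (Aᵀ * A) * sqNorm (x - xstar)) := by
        gcongr
        rw [← hr_eq]
        exact minPosEig_mul_sqNorm_le_sqNorm_mulVec A hx
    _ = _ := by ring

theorem skm_one_step {m n : ℕ} (β : ℕ) (hβ1 : 1 ≤ β) (hβm : β ≤ m)
    (A : Matrix (Fin m) (Fin n) ℝ) (hA : A ≠ 0)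
    (hstd : ∀ i : Fin m, ∑ j, (A i j) ^ 2 = 1)
    (b : Fin m → ℝ)
    (xstar : Fin n → ℝ) (hconsistent : A.mulVec xstar = b)
    (hxstar : xstar ∈ Set.range Aᵀ.mulVec)
    (x : Fin n → ℝ) (hx : x ∈ Set.range Aᵀ.mulVec)
    (i : Finset (Fin m) → Fin m)
    (hi : ∀ τ ∈ Finset.powersetCard β (Finset.univ : Finset (Fin m)),
      i τ ∈ τ ∧ ∀ j ∈ τ, |A j ⬝ᵥ x - b j| ≤ |A (i τ) ⬝ᵥ x - b (i τ)|)
    (xp : Finset (Fin m) → Fin n → ℝ)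
    (hxp : ∀ τ : Finset (Fin m),
      xp τ = fun j => x j - (A (i τ) ⬝ᵥ x - b (i τ)) * A (i τ) j)
    (D : ℝ)
    (hD : D = ∑ τ ∈ Finset.powersetCard β (Finset.univ : Finset (Fin m)),
      sSup ((fun l => (A l ⬝ᵥ x - b l) ^ 2) '' ↑τ))
    (hDpos : 0 < D)
    (ξ : ℝ)
    (hξ : ξ = (∑ τ ∈ Finset.powersetCard β (Finset.univ : Finset (Fin m)),
      ∑ l ∈ τ, (A l ⬝ᵥ x - b l) ^ 2) / D) :
    (1 / (m.choose β : ℝ)) *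
        ∑ τ ∈ Finset.powersetCard β (Finset.univ : Finset (Fin m)),
          sqNorm (xp τ - xstar) ≤
      (1 - ((β : ℝ) / (ξ * (m : ℝ))) * minPosEig (Aᵀ * A)) * sqNorm (x - xstar) := by
  obtain rfl : xp = fun τ => kaczmarzStep (A (i τ)) (b (i τ)) x := funext hxp
  exact skm_one_step_general hβ1 hβm hstd hconsistent
    ((LinearMap.range Aᵀ.mulVecLin).sub_mem hx hxstar) i
    (hD.trans (sum_congr rfl fun τ hτ => sSup_image_sq_eq_of_abs_le (hi τ hτ).1 (hi τ hτ).2))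
    hDpos hξ
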